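/- arXiv:2311.03256 — 5 statements merged into one kernel-verified Lean document; each statement's English description precedes it below -/
import Mathlib

section
/- Let N be a natural number, p1, p2 reals with 0 < p1 < 1 and 0 < p2 < 1, and let i, j be natural numbers with i + j ≤ N. Then for all integers x, y with 0 ≤ x, 0 ≤ y and x + y ≤ N, the bivariate Tratnik polynomials satisfy the recurrence relation −x·T_{i,j}(x,y) = p1(N−i−j)·T_{i+1,j}(x,y) + i(1−p1)·T_{i−1,j}(x,y) − [p1(N−i−j) + i(1−p1)]·T_{i,j}(x,y), where N−i−j denotes the real number N−i−j and the term with index i−1 has coefficient proportional to i (so it is irrelevant when i = 0, and truncated natural subtraction may be used for the index). -/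
/-!
The factor `kraw p2 (N - x) j y` is common to all terms, so the claim is the classical three-term
recurrence in `n` for the Krawtchouk polynomials with parameter `M = N - j`. Write the
hypergeometric sum as `∑_{m ≤ x} c_m C(n,m)`, where `c_m = krawCoeff p M x m` does not involve
`n`. Combining the shifts of `n` by Pascal's rule and using `c_{m+1} p (M - m) = -(x - m) c_m`
(`krawCoeff_succ`), the `m`-th summand of the recurrence becomes `G m - G (m - 1)` with
`G m = (x - m) c_m C(n,m)`. The sum telescopes (`krawSum_telescope`) to `G x = 0`.
-/

/-- The (renormalized) Krawtchouk polynomial `k_n(x; p, N)`.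
For `x ≥ 0` it equals `(p/(1-p))^x * C(N,x) * ₂F₁(-n,-x;-N;1/p)` written as a finite sum,
and it is `0` for `x < 0`. -/
noncomputable def kraw (p : ℝ) (N n : ℕ) (x : ℤ) : ℝ :=
  if x < 0 then 0
  else (p / (1 - p)) ^ x * (N.choose x.toNat : ℝ) *
    ∑ m ∈ Finset.range (min n x.toNat + 1),
      (-1 : ℝ) ^ m * (n.choose m : ℝ) * (x.toNat.choose m : ℝ) * (m.factorial : ℝ) *
        ((N - m).factorial / (N.factorial : ℝ)) * p ^ (-(m : ℤ))

/-- The bivariate Tratnik polynomial of Krawtchouk type `T_{i,j}(x,y; p1,p2,N)`. -/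
noncomputable def tratnik (p1 p2 : ℝ) (N i j : ℕ) (x y : ℤ) : ℝ :=
  if x < 0 ∨ (N : ℤ) < x then 0
  else kraw p1 (N - j) i x * kraw p2 (N - x.toNat) j y

/-- The part of the `m`-th summand of the Krawtchouk sum that does not depend on the degree. -/
noncomputable def krawCoeff (p : ℝ) (M x m : ℕ) : ℝ :=
  (-1 : ℝ) ^ m * (x.choose m : ℝ) * (m.factorial : ℝ) *
    ((M - m).factorial / (M.factorial : ℝ)) * p ^ (-(m : ℤ))

/-- The sum may be extended to `m ≤ x` for every degree, since `C(n,m) = 0` for `m > n`. -/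
lemma kraw_natCast (p : ℝ) (M n x : ℕ) :
    kraw p M n (x : ℤ) = (p / (1 - p)) ^ x * (M.choose x : ℝ) *
      ∑ m ∈ Finset.range (x + 1), krawCoeff p M x m * (n.choose m : ℝ) := by
  have hsub : Finset.range (min n x + 1) ⊆ Finset.range (x + 1) := by
    intro m hm
    simp only [Finset.mem_range] at hm ⊢
    omega
  have hzero : ∀ m ∈ Finset.range (x + 1), m ∉ Finset.range (min n x + 1) →
      krawCoeff p M x m * (n.choose m : ℝ) = 0 := by
    intro m hm hm'
    simp only [Finset.mem_range] at hm hm'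
    rw [Nat.choose_eq_zero_of_lt (by omega : n < m)]
    simp
  rw [← Finset.sum_subset hsub hzero]
  simp only [kraw, Int.toNat_natCast, zpow_natCast]
  rw [if_neg (by omega)]
  congr 1
  refine Finset.sum_congr rfl fun m _ => ?_
  unfold krawCoeff
  ring

lemma cast_succ_mul_choose_succ (n k : ℕ) :
    ((k : ℝ) + 1) * (n.choose (k + 1) : ℝ) = ((n : ℝ) - k) * (n.choose k : ℝ) := by
  rcases le_or_gt k n with h | h
  · have := Nat.choose_succ_right_eq n k
    rw [← Nat.cast_sub h]
    exact_mod_cast (by linarith : (k + 1) * n.choose (k + 1) = (n - k) * n.choose k)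
  · simp [Nat.choose_eq_zero_of_lt h, Nat.choose_eq_zero_of_lt (Nat.lt_succ_of_lt h)]

lemma cast_mul_choose_pred_sub (n k : ℕ) :
    (n : ℝ) * (((n - 1).choose (k + 1) : ℝ) - (n.choose (k + 1) : ℝ))
      = -(((k : ℝ) + 1) * (n.choose (k + 1) : ℝ)) := by
  cases n with
  | zero => simp
  | succ n =>
    have h : (((n + 1) * n.choose k : ℕ) : ℝ) = (((n + 1).choose (k + 1) * (k + 1) : ℕ) : ℝ) := by
      exact_mod_cast Nat.add_one_mul_choose_eq n k
    have h' : ((n + 1).choose (k + 1) : ℝ) = (n.choose k : ℝ) + (n.choose (k + 1) : ℝ) := by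
      exact_mod_cast Nat.choose_succ_succ n k
    push_cast at h ⊢
    linear_combination (-((n : ℝ) + 1)) * h' - h

lemma krawCoeff_succ {p : ℝ} (hp : p ≠ 0) {M x k : ℕ} (hk : k < x) (hx : x ≤ M) :
    krawCoeff p M x (k + 1) * (p * ((M : ℝ) - k)) = -(((x : ℝ) - k) * krawCoeff p M x k) := by
  have hf : ((M - k).factorial : ℝ) = ((M : ℝ) - k) * ((M - (k + 1)).factorial : ℝ) := by
    rw [← Nat.cast_sub (by omega : k ≤ M), ← Nat.cast_mul,
      show M - k = M - (k + 1) + 1 by omega, Nat.factorial_succ]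
  have hz : p ^ (-((k + 1 : ℕ) : ℤ)) * p = p ^ (-(k : ℤ)) := by
    rw [← zpow_add_one₀ hp]
    congr 1
    push_cast
    ring
  have hc := cast_succ_mul_choose_succ x k
  unfold krawCoeff
  rw [hf, ← hz, Nat.factorial_succ]
  push_cast
  linear_combination (-(-1 : ℝ) ^ k * (k.factorial : ℝ) * (((M : ℝ) - k) *
    ((M - (k + 1)).factorial : ℝ) / (M.factorial : ℝ)) * (p ^ (-((k : ℤ) + 1)) * p)) * hc

/-- Partial sums of the summands of the recurrence; the right-hand side vanishes at `k = x`. -/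
lemma krawSum_telescope {p : ℝ} (hp : p ≠ 0) {M x : ℕ} (hx : x ≤ M) (n k : ℕ) (hk : k ≤ x) :
    ∑ m ∈ Finset.range (k + 1), krawCoeff p M x m *
      (p * ((M : ℝ) - n) * (((n + 1).choose m : ℝ) - (n.choose m : ℝ))
        + (n : ℝ) * (1 - p) * (((n - 1).choose m : ℝ) - (n.choose m : ℝ))
        + (x : ℝ) * (n.choose m : ℝ))
      = ((x : ℝ) - k) * krawCoeff p M x k * (n.choose k : ℝ) := by
  induction k with
  | zero => simp [mul_comm]
  | succ k ih =>
    rw [Finset.sum_range_succ, ih (by omega)]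
    have h1 : ((n + 1).choose (k + 1) : ℝ) = (n.choose k : ℝ) + (n.choose (k + 1) : ℝ) := by
      exact_mod_cast Nat.choose_succ_succ n k
    have h2 := cast_mul_choose_pred_sub n k
    have h3 := cast_succ_mul_choose_succ n k
    have h4 := krawCoeff_succ hp (show k < x by omega) hx
    rw [h1]
    push_cast
    linear_combination (krawCoeff p M x (k + 1) * (1 - p)) * h2
      + (krawCoeff p M x (k + 1) * p) * h3 + (n.choose k : ℝ) * h4

/-- The three-term recurrence in the degree. For `x > M` every term vanishes because of the
factor `C(M,x)`. -/
lemma kraw_recurrence {p : ℝ} (hp : p ≠ 0) (M n x : ℕ) :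
    -(x : ℝ) * kraw p M n (x : ℤ) =
      p * ((M : ℝ) - n) * kraw p M (n + 1) (x : ℤ)
      + (n : ℝ) * (1 - p) * kraw p M (n - 1) (x : ℤ)
      - (p * ((M : ℝ) - n) + (n : ℝ) * (1 - p)) * kraw p M n (x : ℤ) := by
  simp only [kraw_natCast]
  rcases lt_or_ge M x with h | h
  · simp [Nat.choose_eq_zero_of_lt h]
  · have key := krawSum_telescope hp h n x le_rfl
    have split : ∑ m ∈ Finset.range (x + 1), krawCoeff p M x m *
        (p * ((M : ℝ) - n) * (((n + 1).choose m : ℝ) - (n.choose m : ℝ))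
          + (n : ℝ) * (1 - p) * (((n - 1).choose m : ℝ) - (n.choose m : ℝ))
          + (x : ℝ) * (n.choose m : ℝ))
        = p * ((M : ℝ) - n) *
            ∑ m ∈ Finset.range (x + 1), krawCoeff p M x m * ((n + 1).choose m : ℝ)
          + (n : ℝ) * (1 - p) *
            ∑ m ∈ Finset.range (x + 1), krawCoeff p M x m * ((n - 1).choose m : ℝ)
          + ((x : ℝ) - p * ((M : ℝ) - n) - (n : ℝ) * (1 - p)) *
            ∑ m ∈ Finset.range (x + 1), krawCoeff p M x m * (n.choose m : ℝ) := by
      simp only [Finset.mul_sum, ← Finset.sum_add_distrib]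
      exact Finset.sum_congr rfl fun m _ => by ring
    rw [split] at key
    linear_combination (-((p / (1 - p)) ^ x * (M.choose x : ℝ))) * key

/-- Recurrence relation (first) for the bivariate Tratnik polynomials. -/
theorem tratnik_recurrence_x (N : ℕ) (p1 p2 : ℝ)
    (hp1 : 0 < p1) (hp1' : p1 < 1) (hp2 : 0 < p2) (hp2' : p2 < 1)
    (i j : ℕ) (hij : i + j ≤ N)
    (x y : ℤ) (hx : 0 ≤ x) (hy : 0 ≤ y) (hxy : x + y ≤ (N : ℤ)) :
    -(x : ℝ) * tratnik p1 p2 N i j x y =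
      p1 * ((N : ℝ) - i - j) * tratnik p1 p2 N (i + 1) j x y
      + (i : ℝ) * (1 - p1) * tratnik p1 p2 N (i - 1) j x y
      - (p1 * ((N : ℝ) - i - j) + (i : ℝ) * (1 - p1)) * tratnik p1 p2 N i j x y := by
  obtain ⟨x, rfl⟩ := Int.eq_ofNat_of_zero_le hx
  have hN : ¬((x : ℤ) < 0 ∨ (N : ℤ) < (x : ℤ)) := by omega
  simp only [tratnik, if_neg hN]
  have h := kraw_recurrence hp1.ne' (N - j) i x
  rw [Nat.cast_sub (by omega : j ≤ N)] at h
  push_cast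
  linear_combination (kraw p2 (N - (x : ℤ).toNat) j y) * h
end

section
/- Let N be a natural number, p1, p2 reals with 0 < p1 < 1 and 0 < p2 < 1, and let i, j be natural numbers with i + j ≤ N. Then for all integers x, y with 0 ≤ x, 0 ≤ y and x + y ≤ N, the bivariate Tratnik polynomials satisfy the recurrence relation −y·T_{i,j}(x,y) = −p1 p2 (N−i−j)·T_{i+1,j}(x,y) − i(1−p1)p2·T_{i−1,j}(x,y) + p2(N−i−j)·T_{i,j+1}(x,y) + j(1−p1)(1−p2)·T_{i,j−1}(x,y) + j p1(1−p2)·T_{i+1,j−1}(x,y) + i p2·T_{i−1,j+1}(x,y) − [(1−p1)p2(N−i−j) + j(1−p2) + i p1 p2]·T_{i,j}(x,y), where N−i−j denotes the real number N−i−j and every term with index i−1 (resp. j−1) has coefficient proportional to i (resp. j), so truncated natural subtraction may be used for the indices. -/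
open Polynomial in
/-- The generating function `(1 + X)^a (1 + (1 - 1/p) X)^b` in `x` of the (unweighted) Krawtchouk
polynomials of degree `b` and size `a + b`. -/
noncomputable def krawGen (p : ℝ) (a b : ℕ) : ℝ[X] :=
  (1 + X) ^ a * (1 + C (1 - p⁻¹) * X) ^ b

open Polynomial in
lemma coeff_krawGen_eq_zero (p : ℝ) {a b x : ℕ} (h : a + b < x) :
    (krawGen p a b).coeff x = 0 := by
  apply coeff_eq_zero_of_natDegree_lt
  refine lt_of_le_of_lt ?_ h
  unfold krawGen
  refine natDegree_mul_le.trans (add_le_add ?_ ?_)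
  · refine natDegree_pow_le_of_le a (m := 1) ?_ |>.trans (by simp)
    compute_degree
  · refine natDegree_pow_le_of_le b (m := 1) ?_ |>.trans (by simp)
    compute_degree

open Polynomial in
/-- Expanding `1 + (1 - 1/p) X = (1 + X) - X/p` by the binomial theorem. -/
lemma coeff_krawGen (p : ℝ) (a b x : ℕ) :
    (krawGen p a b).coeff x = ∑ m ∈ Finset.range (b + 1),
      if m ≤ x then (-p⁻¹) ^ m * (b.choose m : ℝ) * ((a + b - m).choose (x - m) : ℝ) else 0 := by
  have h : krawGen p a b = ∑ m ∈ Finset.range (b + 1),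
      C ((-p⁻¹) ^ m * (b.choose m : ℝ)) * ((1 + X) ^ (a + b - m) * X ^ m) := by
    have e : (1 + C (1 - p⁻¹) * X : ℝ[X]) = C (-p⁻¹) * X + (1 + X) := by
      simp only [map_sub, map_neg, map_one]; ring
    rw [krawGen, e, add_pow (C (-p⁻¹) * X), Finset.mul_sum]
    refine Finset.sum_congr rfl fun m hm => ?_
    have hm' : m ≤ b := by simpa [Nat.lt_succ_iff] using hm
    rw [Nat.add_sub_assoc hm', pow_add, mul_pow, map_mul, map_pow, map_natCast]
    ring
  rw [h, finsetSum_coeff]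
  refine Finset.sum_congr rfl fun m _ => ?_
  rw [coeff_C_mul, coeff_mul_X_pow']
  split_ifs
  · rw [add_comm (1 : ℝ[X]), coeff_X_add_one_pow]
  · simp

/-- The factorials in `kraw` combine to a single binomial coefficient. -/
lemma choose_mul_falling {N x m : ℕ} (hm : m ≤ x) (hx : x ≤ N) :
    (N.choose x : ℝ) * ((x.choose m : ℝ) * (m.factorial : ℝ) *
      ((N - m).factorial / (N.factorial : ℝ))) = ((N - m).choose (x - m) : ℝ) := by
  rw [Nat.cast_choose ℝ hx, Nat.cast_choose ℝ hm,
    Nat.cast_choose ℝ (Nat.sub_le_sub_right hx m), show N - m - (x - m) = N - x by omega]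
  have h (k : ℕ) : (k.factorial : ℝ) ≠ 0 := by exact_mod_cast k.factorial_ne_zero
  have := h N
  have := h x
  have := h m
  have := h (N - x)
  have := h (x - m)
  field_simp

lemma kraw_eq_zero (p : ℝ) {N x : ℕ} (n : ℕ) (h : N < x) : kraw p N n (x : ℤ) = 0 := by
  simp [kraw, Nat.choose_eq_zero_of_lt h]

lemma kraw_eq (p : ℝ) (a b x : ℕ) :
    kraw p (a + b) b (x : ℤ) = (p / (1 - p)) ^ x * (krawGen p a b).coeff x := by
  rcases lt_or_ge (a + b) x with h | h
  · rw [kraw_eq_zero p b h, coeff_krawGen_eq_zero p h, mul_zero]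
  rw [kraw, if_neg (by omega), coeff_krawGen, Int.toNat_natCast, zpow_natCast, mul_assoc,
    ← Finset.sum_filter]
  have hr : (Finset.range (b + 1)).filter (· ≤ x) = Finset.range (min b x + 1) := by
    ext m; simp only [Finset.mem_filter, Finset.mem_range]; omega
  rw [hr, Finset.mul_sum]
  congr 1
  refine Finset.sum_congr rfl fun m hm => ?_
  have hm' : m ≤ x := by have := Finset.mem_range.1 hm; omega
  rw [← choose_mul_falling hm' h, zpow_neg, zpow_natCast, neg_pow p⁻¹, inv_pow]
  ring

open Polynomial in
lemma coeff_raise {p : ℝ} (hp : p ≠ 0) (a b x : ℕ) :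
    (krawGen p a b).coeff x =
      (1 - p) * (krawGen p (a + 1) b).coeff x + p * (krawGen p a (b + 1)).coeff x := by
  have hC : (C p * C p⁻¹ : ℝ[X]) = 1 := by rw [← C_mul, mul_inv_cancel₀ hp, C_1]
  have h : krawGen p a b = C (1 - p) * krawGen p (a + 1) b + C p * krawGen p a (b + 1) := by
    simp only [krawGen, pow_succ, map_sub, map_one]
    linear_combination ((1 + X) ^ a * (1 + (1 - C p⁻¹) * X) ^ b * X) * hC
  rw [h, coeff_add, coeff_C_mul, coeff_C_mul]

open Polynomial in
lemma coeff_lower (p : ℝ) (a b x : ℕ) :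
    ((a : ℝ) + b - x) * (krawGen p a b).coeff x =
      a * (krawGen p (a - 1) b).coeff x + b * (krawGen p a (b - 1)).coeff x := by
  have key (c : ℝ) (n : ℕ) : C (n : ℝ) * (1 + C c * X) ^ n - X * derivative ((1 + C c * X) ^ n)
      = C (n : ℝ) * (1 + C c * X) ^ (n - 1) := by
    rcases n with _ | n
    · simp
    · rw [derivative_pow]
      simp only [derivative_add, derivative_one, derivative_C_mul, derivative_X,
        Nat.add_sub_cancel, pow_succ]
      ring
  have h : (C (a : ℝ) + C (b : ℝ)) * krawGen p a b - X * derivative (krawGen p a b) =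
      C (a : ℝ) * krawGen p (a - 1) b + C (b : ℝ) * krawGen p a (b - 1) := by
    have ha := key 1 a
    rw [C_1, one_mul] at ha
    simp only [krawGen, derivative_mul]
    linear_combination (1 + C (1 - p⁻¹) * X) ^ b * ha + (1 + X) ^ a * key (1 - p⁻¹) b
  have hX (q : ℝ[X]) : (X * derivative q).coeff x = x * q.coeff x := by
    rcases x with _ | x
    · simp
    · rw [coeff_X_mul, coeff_derivative]; push_cast; ring
  have hc := congrArg (fun q => q.coeff x) h
  simp only [coeff_sub, coeff_add, add_mul, coeff_C_mul, hX] at hc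
  linear_combination hc

/-- The three-term recurrence of the Krawtchouk polynomials, in the degree. -/
lemma coeff_recurrence {p : ℝ} (hp : p ≠ 0) (a b x : ℕ) :
    -(x : ℝ) * (krawGen p a b).coeff x =
      p * a * (krawGen p (a - 1) (b + 1)).coeff x
      + (1 - p) * b * (krawGen p (a + 1) (b - 1)).coeff x
      - (p * a + (1 - p) * b) * (krawGen p a b).coeff x := by
  have hl := coeff_lower p a b x
  have ha : (a : ℝ) * (krawGen p (a - 1) b).coeff x = a * ((1 - p) * (krawGen p a b).coeff x
      + p * (krawGen p (a - 1) (b + 1)).coeff x) := by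
    rcases a with _ | a
    · simp
    · simp only [Nat.add_sub_cancel]; rw [coeff_raise hp a b x]
  have hb : (b : ℝ) * (krawGen p a (b - 1)).coeff x =
      b * ((1 - p) * (krawGen p (a + 1) (b - 1)).coeff x + p * (krawGen p a b).coeff x) := by
    rcases b with _ | b
    · simp
    · simp only [Nat.add_sub_cancel]; rw [coeff_raise hp a b x]
  linear_combination hl + ha + hb

/-- For `N < x + j` the index `N - x - j` is truncated, but then the first coefficient vanishes, the
degree of `krawGen p1 (N - i - j) i` being at most `N - j`. -/
lemma tratnik_eq (p1 p2 : ℝ) {N i j x : ℕ} (y : ℕ) (hij : i + j ≤ N) (hx : x ≤ N) :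
    tratnik p1 p2 N i j x y = (p1 / (1 - p1)) ^ x * (p2 / (1 - p2)) ^ y *
      ((krawGen p1 (N - i - j) i).coeff x * (krawGen p2 (N - x - j) j).coeff y) := by
  have h1 := kraw_eq p1 (N - i - j) i x
  rw [show N - i - j + i = N - j by omega] at h1
  rw [tratnik, if_neg (by omega), h1, Int.toNat_natCast]
  rcases le_or_gt (x + j) N with h | h
  · have h2 := kraw_eq p2 (N - x - j) j y
    rw [show N - x - j + j = N - x by omega] at h2
    rw [h2]
    ring
  · rw [coeff_krawGen_eq_zero p1 (show N - i - j + i < x by omega)]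
    ring

/-- Recurrence relation (second) for the bivariate Tratnik polynomials. -/
theorem tratnik_recurrence_y (N : ℕ) (p1 p2 : ℝ)
    (hp1 : 0 < p1) (hp1' : p1 < 1) (hp2 : 0 < p2) (hp2' : p2 < 1)
    (i j : ℕ) (hij : i + j ≤ N)
    (x y : ℤ) (hx : 0 ≤ x) (hy : 0 ≤ y) (hxy : x + y ≤ (N : ℤ)) :
    -(y : ℝ) * tratnik p1 p2 N i j x y =
      - p1 * p2 * ((N : ℝ) - i - j) * tratnik p1 p2 N (i + 1) j x y
      - (i : ℝ) * (1 - p1) * p2 * tratnik p1 p2 N (i - 1) j x y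
      + p2 * ((N : ℝ) - i - j) * tratnik p1 p2 N i (j + 1) x y
      + (j : ℝ) * (1 - p1) * (1 - p2) * tratnik p1 p2 N i (j - 1) x y
      + (j : ℝ) * p1 * (1 - p2) * tratnik p1 p2 N (i + 1) (j - 1) x y
      + (i : ℝ) * p2 * tratnik p1 p2 N (i - 1) (j + 1) x y
      - ((1 - p1) * p2 * ((N : ℝ) - i - j) + (j : ℝ) * (1 - p2) + (i : ℝ) * p1 * p2)
          * tratnik p1 p2 N i j x y := by
  lift x to ℕ using hx
  lift y to ℕ using hy
  have hxN : x ≤ N := by omega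
  obtain ⟨a, rfl⟩ : ∃ a, N = a + i + j := ⟨N - i - j, by omega⟩
  have hp1z := hp1.ne'
  have hp2z := hp2.ne'
  set w : ℝ := (p1 / (1 - p1)) ^ x * (p2 / (1 - p2)) ^ y with hw
  set d := a + i + j - x - j with hd
  set F : ℕ → ℕ → ℝ := fun a b => (krawGen p1 a b).coeff x with hF
  set G : ℕ → ℕ → ℝ := fun a b => (krawGen p2 a b).coeff y with hG
  have key (i' j' a' d' : ℕ) (h : a + i + j = a' + i' + j') (h' : a + i + j - x - j' = d') :
      tratnik p1 p2 (a + i + j) i' j' x y = w * (F a' i' * G d' j') := by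
    rw [tratnik_eq p1 p2 y (by omega) hxN, show a + i + j - i' - j' = a' by omega, h']
  have t00 := key i j a d (by omega) rfl
  -- In each shifted term the coefficient `a`, `i` or `j` vanishes when the shift leaves the range.
  have t10 : (a : ℝ) * tratnik p1 p2 (a + i + j) (i + 1) j x y
      = a * (w * (F (a - 1) (i + 1) * G d j)) := by
    rcases a.eq_zero_or_pos with h | h
    · simp [h]
    · rw [key (i + 1) j (a - 1) d (by omega) (by omega)]
  have tm0 : (i : ℝ) * tratnik p1 p2 (a + i + j) (i - 1) j x y
      = i * (w * (F (a + 1) (i - 1) * G d j)) := by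
    rcases i.eq_zero_or_pos with h | h
    · simp [h]
    · rw [key (i - 1) j (a + 1) d (by omega) (by omega)]
  have t01 : (a : ℝ) * tratnik p1 p2 (a + i + j) i (j + 1) x y
      = a * (w * (F (a - 1) i * G (d - 1) (j + 1))) := by
    rcases a.eq_zero_or_pos with h | h
    · simp [h]
    · rw [key i (j + 1) (a - 1) (d - 1) (by omega) (by omega)]
  have tm1 : (i : ℝ) * tratnik p1 p2 (a + i + j) (i - 1) (j + 1) x y
      = i * (w * (F a (i - 1) * G (d - 1) (j + 1))) := by
    rcases i.eq_zero_or_pos with h | h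
    · simp [h]
    · rw [key (i - 1) (j + 1) a (d - 1) (by omega) (by omega)]
  set e := a + i + j - x - (j - 1) with he
  have t0m : (j : ℝ) * tratnik p1 p2 (a + i + j) i (j - 1) x y
      = j * (w * (F (a + 1) i * G e (j - 1))) := by
    rcases j.eq_zero_or_pos with h | h
    · simp [h]
    · rw [key i (j - 1) (a + 1) e (by omega) (by omega)]
  have t1m : (j : ℝ) * tratnik p1 p2 (a + i + j) (i + 1) (j - 1) x y
      = j * (w * (F a (i + 1) * G e (j - 1))) := by
    rcases j.eq_zero_or_pos with h | h
    · simp [h]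
    · rw [key (i + 1) (j - 1) a e (by omega) (by omega)]
  have hraise : F a i = (1 - p1) * F (a + 1) i + p1 * F a (i + 1) := coeff_raise hp1z a i x
  have hlower : ((a : ℝ) + i - x) * F a i = a * F (a - 1) i + i * F a (i - 1) :=
    coeff_lower p1 a i x
  have hrecF : -(x : ℝ) * F a i = p1 * a * F (a - 1) (i + 1) + (1 - p1) * i * F (a + 1) (i - 1)
      - (p1 * a + (1 - p1) * i) * F a i := coeff_recurrence hp1z a i x
  -- Off the support of `F a i` (where `d` is truncated) both sides of this vanish.
  have hrecG : F a i * (-(y : ℝ) * G d j) = F a i * (p2 * ((a : ℝ) + i - x) * G (d - 1) (j + 1)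
      + (1 - p2) * (j * G e (j - 1)) - (p2 * ((a : ℝ) + i - x) + (1 - p2) * j) * G d j) := by
    rcases lt_or_ge (a + i) x with h | h
    · rw [show F a i = 0 from coeff_krawGen_eq_zero p1 h, zero_mul, zero_mul]
    · have hdr : (d : ℝ) = a + i - x := by
        rw [show d = a + i - x by omega, Nat.cast_sub h]; push_cast; ring
      have hG' : (j : ℝ) * G e (j - 1) = j * G (d + 1) (j - 1) := by
        rcases j.eq_zero_or_pos with h' | h'
        · simp [h']
        · rw [show e = d + 1 by omega]
      have hr : -(y : ℝ) * G d j = p2 * d * G (d - 1) (j + 1) + (1 - p2) * j * G (d + 1) (j - 1)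
          - (p2 * d + (1 - p2) * j) * G d j := coeff_recurrence hp2z d j y
      rw [hG', hr, hdr]
      ring
  rw [t00]
  push_cast
  linear_combination w * hrecG + p2 * w * G (d - 1) (j + 1) * hlower
    + (1 - p2) * j * w * G e (j - 1) * hraise - p2 * w * G d j * hrecF
    + p1 * p2 * t10 + (1 - p1) * p2 * tm0 - p2 * t01 - p2 * tm1
    - (1 - p1) * (1 - p2) * t0m - p1 * (1 - p2) * t1m
end

section
/- Let N be a natural number, p1, p2, p3 reals with 0 < p1, p2, p3 < 1, and λ a real number. Then for all natural numbers i, j, x, y with i + j ≤ N and x + y ≤ N, the λ-Griffiths polynomials satisfy the duality relation (1/(i!·j!·(N−i−j)!)) · (p1/(1−p1))^i · (p2/(1−p2))^j · G^{λ(1−p1)/p1}_{i,j}(x,y;p1,p2,p3;N) = (1/(x!·y!·(N−x−y)!)) · (p3/(1−p3))^x · (p2/(1−p2))^y · G^{λ(1−p3)/p3}_{x,y}(i,j;p3,p2,p1;N). -/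
/-- The `λ`-Griffiths polynomial `G^λ_{i,j}(x,y; p1,p2,p3; N)`. -/
noncomputable def griffiths (lam p1 p2 p3 : ℝ) (N i j : ℕ) (x y : ℤ) : ℝ :=
  if y < 0 ∨ (N : ℤ) < y then 0
  else ∑ a ∈ Finset.range (N - j + 1),
    lam ^ a * kraw p1 (N - j) i (a : ℤ) * kraw p2 (N - a) j y * kraw p3 (N - y.toNat) a x

/-- The terminating hypergeometric sum `₂F₁(-n,-x;-N;1/p)`. -/
noncomputable def krawF (p : ℝ) (N n x : ℕ) : ℝ :=
  ∑ m ∈ Finset.range (min n x + 1),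
    (-1 : ℝ) ^ m * (n.choose m : ℝ) * (x.choose m : ℝ) * (m.factorial : ℝ) *
      ((N - m).factorial / (N.factorial : ℝ)) * p ^ (-(m : ℤ))

lemma krawF_comm (p : ℝ) (N n x : ℕ) : krawF p N n x = krawF p N x n := by
  unfold krawF
  rw [min_comm]
  refine Finset.sum_congr rfl fun m _ => ?_
  ring

lemma kraw_natCast_s4 (p : ℝ) (N n x : ℕ) :
    kraw p N n (x : ℤ) = (p / (1 - p)) ^ x * (N.choose x : ℝ) * krawF p N n x := by
  have h : ¬ ((x : ℤ) < 0) := by omega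
  simp only [kraw, krawF, h, if_false, Int.toNat_natCast, zpow_natCast]

/-- The sum may be taken over `a ≤ N`: the terms with `N - j < a` contain `C(N-j,a) = 0`. -/
lemma griffiths_natCast (lam p1 p2 p3 : ℝ) (N i j x y : ℕ) (hy : y ≤ N) :
    griffiths lam p1 p2 p3 N i j (x : ℤ) (y : ℤ) =
      ∑ a ∈ Finset.range (N + 1),
        lam ^ a * ((p1 / (1 - p1)) ^ a * ((N - j).choose a : ℝ) * krawF p1 (N - j) i a) *
          ((p2 / (1 - p2)) ^ y * ((N - a).choose y : ℝ) * krawF p2 (N - a) j y) *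
          ((p3 / (1 - p3)) ^ x * ((N - y).choose x : ℝ) * krawF p3 (N - y) a x) := by
  have h : ¬ ((y : ℤ) < 0 ∨ (N : ℤ) < y) := by omega
  simp only [griffiths, h, if_false, kraw_natCast_s4, Int.toNat_natCast]
  refine Finset.sum_subset (fun a ha => ?_) (fun a _ ha => ?_)
  · simp only [Finset.mem_range] at ha ⊢
    omega
  · simp only [Finset.mem_range] at ha
    rw [Nat.choose_eq_zero_of_lt (show N - j < a by omega)]
    simp

lemma choose_identity (N i j x y a : ℕ) (hij : i + j ≤ N) (hxy : x + y ≤ N) (ha : a ≤ N) :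
    (1 / ((i.factorial : ℝ) * j.factorial * (N - i - j).factorial)) *
      (((N - j).choose a : ℝ) * ((N - a).choose y : ℝ) * ((N - y).choose x : ℝ)) =
    (1 / ((x.factorial : ℝ) * y.factorial * (N - x - y).factorial)) *
      (((N - y).choose a : ℝ) * ((N - a).choose j : ℝ) * ((N - j).choose i : ℝ)) := by
  by_cases hj : a ≤ N - j
  · by_cases hy : a ≤ N - y
    · rw [Nat.cast_choose ℝ hj, Nat.cast_choose ℝ hy,
        Nat.cast_choose ℝ (show y ≤ N - a by omega), Nat.cast_choose ℝ (show j ≤ N - a by omega),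
        Nat.cast_choose ℝ (show x ≤ N - y by omega), Nat.cast_choose ℝ (show i ≤ N - j by omega),
        Nat.sub_right_comm N a y, Nat.sub_right_comm N a j,
        Nat.sub_right_comm N y x, Nat.sub_right_comm N j i]
      have hf : ∀ n : ℕ, (n.factorial : ℝ) ≠ 0 := fun n => Nat.cast_ne_zero.2 n.factorial_ne_zero
      field_simp [hf]
    · rw [Nat.choose_eq_zero_of_lt (show N - y < a by omega),
        Nat.choose_eq_zero_of_lt (show N - a < y by omega)]
      simp
  · rw [Nat.choose_eq_zero_of_lt (show N - j < a by omega),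
      Nat.choose_eq_zero_of_lt (show N - a < j by omega)]
    simp

/-- Duality relation for the `λ`-Griffiths polynomials. -/
theorem griffiths_duality (N : ℕ) (p1 p2 p3 : ℝ)
    (hp1 : 0 < p1) (hp1' : p1 < 1) (hp2 : 0 < p2) (hp2' : p2 < 1)
    (hp3 : 0 < p3) (hp3' : p3 < 1) (lam : ℝ)
    (i j x y : ℕ) (hij : i + j ≤ N) (hxy : x + y ≤ N) :
    (1 / ((i.factorial : ℝ) * j.factorial * (N - i - j).factorial))
      * (p1 / (1 - p1)) ^ i * (p2 / (1 - p2)) ^ j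
      * griffiths (lam * (1 - p1) / p1) p1 p2 p3 N i j (x : ℤ) (y : ℤ) =
    (1 / ((x.factorial : ℝ) * y.factorial * (N - x - y).factorial))
      * (p3 / (1 - p3)) ^ x * (p2 / (1 - p2)) ^ y
      * griffiths (lam * (1 - p3) / p3) p3 p2 p1 N x y (i : ℤ) (j : ℤ) := by
  have cancel : ∀ p : ℝ, 0 < p → p < 1 → ∀ a : ℕ,
      (lam * (1 - p) / p) ^ a * (p / (1 - p)) ^ a = lam ^ a := by
    intro p h0 h1 a
    have h2 : 1 - p ≠ 0 := by linarith
    rw [← mul_pow]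
    congr 1
    field_simp
  rw [griffiths_natCast _ _ _ _ _ _ _ _ _ (show y ≤ N by omega),
    griffiths_natCast _ _ _ _ _ _ _ _ _ (show j ≤ N by omega), Finset.mul_sum, Finset.mul_sum]
  refine Finset.sum_congr rfl fun a ha => ?_
  have hc := choose_identity N i j x y a hij hxy (by simp only [Finset.mem_range] at ha; omega)
  have h1 := cancel p1 hp1 hp1' a
  have h3 := cancel p3 hp3 hp3' a
  rw [krawF_comm p1 (N - j) a i, krawF_comm p2 (N - a) y j, krawF_comm p3 (N - y) x a]
  generalize 1 / ((i.factorial : ℝ) * j.factorial * (N - i - j).factorial) = A at *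
  generalize 1 / ((x.factorial : ℝ) * y.factorial * (N - x - y).factorial) = B at *
  generalize p1 / (1 - p1) = r1 at *
  generalize p2 / (1 - p2) = r2 at *
  generalize p3 / (1 - p3) = r3 at *
  generalize krawF p1 (N - j) i a = F1
  generalize krawF p2 (N - a) j y = F2
  generalize krawF p3 (N - y) a x = F3
  calc _ = ((lam * (1 - p1) / p1) ^ a * r1 ^ a) *
        (A * (((N - j).choose a : ℝ) * ((N - a).choose y : ℝ) * ((N - y).choose x : ℝ))) *
        (r1 ^ i * r2 ^ j * r2 ^ y * r3 ^ x * F1 * F2 * F3) := by ring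
    _ = ((lam * (1 - p3) / p3) ^ a * r3 ^ a) *
        (B * (((N - y).choose a : ℝ) * ((N - a).choose j : ℝ) * ((N - j).choose i : ℝ))) *
        (r1 ^ i * r2 ^ j * r2 ^ y * r3 ^ x * F1 * F2 * F3) := by rw [h1, h3, hc]
    _ = _ := by ring
end

section
/- Let N be a natural number, p1, p2, p3 reals with 0 < p1, p2, p3 < 1, and λ a nonzero real number. Then for all natural numbers i, j with i + j ≤ N and all integers x, y with 0 ≤ x, 0 ≤ y and x + y ≤ N, the λ-Griffiths polynomials satisfy the difference relation −i·G^λ_{i,j}(x,y) = (x+1)·((1−λ)/λ)·(1−p3)·(λp1(p2−1)+p1−1)·G^λ_{i,j}(x+1,y) − (N−x−y+1)·((λ(p3−1)−p3)/(λ(p3−1)))·(λp1(1−p2)(1−p3)−p3(1−p1))·G^λ_{i,j}(x−1,y) − (1+y)·p1(1−p2)(1−λ)·G^λ_{i,j}(x,y+1) − (N−x−y+1)·(p2/(λ(1−p2)))·(λp1(1−p2)(1−p3)−p3(1−p1))·G^λ_{i,j}(x,y−1) − (x+1)·(p2(1−p3)/(λ(1−p2)))·(λp1(1−p2)+1−p1)·G^λ_{i,j}(x+1,y−1)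 − (y+1)·(p1(1−p2)/(1−p3))·(λ(1−p3)+p3)·G^λ_{i,j}(x−1,y+1) − [ x·(1/λ)·(λ(1−p3)+p3)·(λp1(1−p2)+1−p1) + y·p1 p2 + (N−x−y)·((1−λ)/λ)·(λp1(1−p2)(1−p3)−p3(1−p1)) ]·G^λ_{i,j}(x,y), where arguments with y < 0 or y > N give the value 0 by the defining convention. -/
/-- The binomial coefficient `C(M, z)` with an integer lower index, equal to `0` for `z < 0`. -/
noncomputable def ichoose (M : ℕ) (z : ℤ) : ℝ :=
  if z < 0 then 0 else (M.choose z.toNat : ℝ)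

lemma ichoose_of_neg {M : ℕ} {z : ℤ} (h : z < 0) : ichoose M z = 0 := if_pos h

lemma ichoose_natCast (M k : ℕ) : ichoose M (k : ℤ) = M.choose k := by
  simp [ichoose]

lemma ichoose_succ (M : ℕ) (z : ℤ) :
    ichoose (M + 1) z = ichoose M z + ichoose M (z - 1) := by
  rcases lt_or_ge z 0 with h | h
  · simp [ichoose_of_neg h, ichoose_of_neg (show z - 1 < 0 by omega)]
  · obtain ⟨k, rfl⟩ := Int.eq_ofNat_of_zero_le h
    rcases k with _ | k
    · simp [ichoose]
    · rw [show ((k + 1 : ℕ) : ℤ) - 1 = (k : ℤ) by push_cast; ring, ichoose_natCast,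
        ichoose_natCast, ichoose_natCast, Nat.choose_succ_succ]
      push_cast; ring

/-- Trading `C(N,x) C(x,m) m! (N-m)!/N!` for `C(N-m, x-m)` removes the truncation of the sum and
makes sense of the formula for every integer `x`. -/
lemma kraw_eq_s7 (p : ℝ) (N n : ℕ) (hn : n ≤ N) (x : ℤ) :
    kraw p N n x = (p / (1 - p)) ^ x *
      ∑ m ∈ Finset.range (n + 1), (-p⁻¹) ^ m * (n.choose m : ℝ) * ichoose (N - m) (x - m) := by
  rcases lt_or_ge x 0 with h | h
  · rw [kraw, if_pos h, Finset.sum_eq_zero, mul_zero]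
    intro m _
    rw [ichoose_of_neg (by omega), mul_zero]
  · obtain ⟨k, rfl⟩ := Int.eq_ofNat_of_zero_le h
    rw [kraw, if_neg (not_lt.mpr h), mul_assoc, Finset.mul_sum]
    congr 1
    simp only [Int.toNat_natCast]
    have hsub : Finset.range (min n k + 1) ⊆ Finset.range (n + 1) :=
      Finset.range_subset_range.mpr (by omega)
    refine Eq.trans ?_ (Finset.sum_subset hsub ?_)
    · refine Finset.sum_congr rfl fun m hm => ?_
      rw [Finset.mem_range] at hm
      have hmk : m ≤ k := by omega
      have hmN : m ≤ N := by omega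
      rw [show (k : ℤ) - m = ((k - m : ℕ) : ℤ) by omega, ichoose_natCast, zpow_neg,
        zpow_natCast, neg_pow p⁻¹, inv_pow]
      have h1 : (N.choose k : ℝ) * k.choose m = N.choose m * (N - m).choose (k - m) := by
        exact_mod_cast Nat.choose_mul hmk
      have h2 : (N.choose m : ℝ) * m.factorial * (N - m).factorial = N.factorial := by
        exact_mod_cast Nat.choose_mul_factorial_mul_factorial hmN
      have h3 : (N.factorial : ℝ) ≠ 0 := by positivity
      have h4 : (N.choose k : ℝ) * k.choose m * (m.factorial * ((N - m).factorial / N.factorial))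
          = (N - m).choose (k - m) := by
        rw [h1]; field_simp; rw [← h2]; ring
      rw [← h4]; ring
    · intro m hm hm'
      simp only [Finset.mem_range] at hm hm'
      rw [ichoose_of_neg (by omega), mul_zero]

lemma kraw_of_neg (p : ℝ) (N n : ℕ) {x : ℤ} (h : x < 0) : kraw p N n x = 0 := if_pos h

lemma kraw_of_lt (p : ℝ) (N n : ℕ) {x : ℤ} (h : (N : ℤ) < x) : kraw p N n x = 0 := by
  rw [kraw, if_neg (by omega), Nat.choose_eq_zero_of_lt (by omega)]; simp

lemma kraw_zero_zero (p : ℝ) (x : ℤ) : kraw p 0 0 x = if x = 0 then 1 else 0 := by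
  rcases lt_trichotomy x 0 with h | rfl | h
  · rw [kraw_of_neg _ _ _ h, if_neg h.ne]
  · simp [kraw]
  · rw [kraw_of_lt _ _ _ (by simpa using h), if_neg h.ne']

lemma rho_mul_zpow {r : ℝ} (hr : r ≠ 0) (x : ℤ) (s : ℝ) : r * (r ^ (x - 1) * s) = r ^ x * s := by
  rw [← mul_assoc, ← zpow_one_add₀ hr, add_sub_cancel]

/-- Multiplication of the generating function of `kraw p N n` by `1 + ρ z`. -/
lemma kraw_succ (p : ℝ) (hp : 0 < p) (hp' : p < 1) (N n : ℕ) (hn : n ≤ N) (x : ℤ) :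
    kraw p (N + 1) n x = kraw p N n x + p / (1 - p) * kraw p N n (x - 1) := by
  have hr : p / (1 - p) ≠ 0 := div_ne_zero hp.ne' (by linarith)
  have hs (s : ℝ) := rho_mul_zpow hr x s
  rw [kraw_eq_s7 p _ n (by omega), kraw_eq_s7 p N n hn, kraw_eq_s7 p N n hn, hs, ← mul_add,
    ← Finset.sum_add_distrib]
  congr 1
  refine Finset.sum_congr rfl fun m hm => ?_
  rw [Finset.mem_range] at hm
  rw [show N + 1 - m = (N - m) + 1 by omega, ichoose_succ,
    show x - 1 - (m : ℤ) = x - m - 1 by ring]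
  ring

/-- Multiplication of the generating function of `kraw p N n` by `1 - z`. -/
lemma kraw_succ_succ (p : ℝ) (hp : 0 < p) (hp' : p < 1) (N n : ℕ) (hn : n ≤ N) (x : ℤ) :
    kraw p (N + 1) (n + 1) x = kraw p N n x - kraw p N n (x - 1) := by
  have hr : p / (1 - p) ≠ 0 := div_ne_zero hp.ne' (by linarith)
  have hq : (1 - p) ≠ 0 := by linarith
  have key : kraw p (N + 1) (n + 1) x
      = kraw p (N + 1) n x - p⁻¹ * (p / (1 - p) * kraw p N n (x - 1)) := by
    have hs (s : ℝ) := rho_mul_zpow hr x s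
    rw [kraw_eq_s7 p _ (n + 1) (by omega), kraw_eq_s7 p _ n (by omega), kraw_eq_s7 p N n hn, hs,
      mul_left_comm, ← mul_sub]
    congr 1
    -- Pascal's rule for `C(n + 1, m)`
    have e1 : ∀ m ∈ Finset.range (n + 1),
        (-p⁻¹) ^ (m + 1) * ((n + 1).choose (m + 1) : ℝ)
            * ichoose (N + 1 - (m + 1)) (x - ((m + 1 : ℕ) : ℤ))
          = (-p⁻¹) ^ (m + 1) * (n.choose (m + 1) : ℝ)
              * ichoose (N + 1 - (m + 1)) (x - ((m + 1 : ℕ) : ℤ))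
            - p⁻¹ * ((-p⁻¹) ^ m * (n.choose m : ℝ) * ichoose (N - m) (x - 1 - m)) := by
      intro m _
      rw [Nat.choose_succ_succ', Nat.add_sub_add_right,
        show x - ((m + 1 : ℕ) : ℤ) = x - 1 - m by push_cast; ring]
      push_cast; ring
    have e2 : ∑ m ∈ Finset.range (n + 1),
          (-p⁻¹) ^ m * (n.choose m : ℝ) * ichoose (N + 1 - m) (x - m)
        = ∑ m ∈ Finset.range (n + 1), (-p⁻¹) ^ (m + 1) * (n.choose (m + 1) : ℝ)
            * ichoose (N + 1 - (m + 1)) (x - ((m + 1 : ℕ) : ℤ))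
          + (-p⁻¹) ^ 0 * ((n + 1).choose 0 : ℝ) * ichoose (N + 1 - 0) (x - ((0 : ℕ) : ℤ)) := by
      rw [Finset.sum_range_succ', Finset.sum_range_succ _ n, Nat.choose_succ_self]
      simp
    rw [Finset.sum_range_succ', Finset.sum_congr rfl e1, Finset.sum_sub_distrib,
      ← Finset.mul_sum, e2]
    ring
  rw [key, kraw_succ p hp hp' N n hn]
  field_simp
  ring

/-- The part of a summand of `griffiths` that depends on `x` and `y`. Its generating function is
`(A - v)^j (A + ρ₂ v)^(N-a-j) (t - u)^a` with `A = t + ρ₃ u`. -/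
noncomputable def inner23 (p2 p3 : ℝ) (N j a : ℕ) (x y : ℤ) : ℝ :=
  kraw p2 (N - a) j y * kraw p3 (N - y.toNat) a x

lemma kraw_mul_kraw_succ (p2 p3 : ℝ) (hp3 : 0 < p3) (hp3' : p3 < 1) (N j a : ℕ)
    (ha : a ≤ N) (x y : ℤ) :
    kraw p2 (N - a) j y * kraw p3 (N + 1 - y.toNat) a x
      = kraw p2 (N - a) j y * (kraw p3 (N - y.toNat) a x
        + p3 / (1 - p3) * kraw p3 (N - y.toNat) a (x - 1)) := by
  -- outside `0 ≤ y ≤ N - a` the first factor vanishes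
  rcases lt_or_ge y 0 with h0 | h0
  · simp [kraw_of_neg _ _ _ h0]
  rcases lt_or_ge ((N - a : ℕ) : ℤ) y with h1 | h1
  · simp [kraw_of_lt _ _ _ h1]
  rw [show N + 1 - y.toNat = (N - y.toNat) + 1 by omega, kraw_succ p3 hp3 hp3' _ _ (by omega)]

lemma kraw_mul_kraw_shift (p2 p3 : ℝ) (N j a : ℕ) (x y : ℤ) (M : ℕ) :
    kraw p2 M j (y - 1) * kraw p3 (N + 1 - y.toNat) a x
      = kraw p2 M j (y - 1) * kraw p3 (N - (y - 1).toNat) a x := by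
  rcases lt_or_ge (y - 1) 0 with h0 | h0
  · simp [kraw_of_neg _ _ _ h0]
  rw [show N + 1 - y.toNat = N - (y - 1).toNat by omega]

lemma inner23_succ (p2 p3 : ℝ) (hp2 : 0 < p2) (hp2' : p2 < 1) (hp3 : 0 < p3) (hp3' : p3 < 1)
    (N j a : ℕ) (h : a + j ≤ N) (x y : ℤ) :
    inner23 p2 p3 (N + 1) j a x y = inner23 p2 p3 N j a x y
    + p3 / (1 - p3) * inner23 p2 p3 N j a (x - 1) y
    + p2 / (1 - p2) * inner23 p2 p3 N j a x (y - 1) := by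
  unfold inner23
  rw [show N + 1 - a = (N - a) + 1 by omega, kraw_succ p2 hp2 hp2' _ _ (by omega)]
  linear_combination kraw_mul_kraw_succ p2 p3 hp3 hp3' N j a (by omega) x y
    + p2 / (1 - p2) * kraw_mul_kraw_shift p2 p3 N j a x y (N - a)

lemma inner23_succ_j (p2 p3 : ℝ) (hp2 : 0 < p2) (hp2' : p2 < 1) (hp3 : 0 < p3) (hp3' : p3 < 1)
    (N j a : ℕ) (h : a + j ≤ N) (x y : ℤ) :
    inner23 p2 p3 (N + 1) (j + 1) a x y = inner23 p2 p3 N j a x y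
    + p3 / (1 - p3) * inner23 p2 p3 N j a (x - 1) y
    - inner23 p2 p3 N j a x (y - 1) := by
  unfold inner23
  rw [show N + 1 - a = (N - a) + 1 by omega, kraw_succ_succ p2 hp2 hp2' _ _ (by omega)]
  linear_combination kraw_mul_kraw_succ p2 p3 hp3 hp3' N j a (by omega) x y
    - kraw_mul_kraw_shift p2 p3 N j a x y (N - a)

lemma inner23_succ_a (p2 p3 : ℝ) (hp3 : 0 < p3) (hp3' : p3 < 1) (N j a : ℕ)
    (h : a + j ≤ N) (x y : ℤ) :
    inner23 p2 p3 (N + 1) j (a + 1) x y = inner23 p2 p3 N j a x y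
    - inner23 p2 p3 N j a (x - 1) y := by
  unfold inner23
  rw [Nat.add_sub_add_right]
  rcases lt_or_ge y 0 with h0 | h0
  · simp [kraw_of_neg _ _ _ h0]
  rcases lt_or_ge ((N - a : ℕ) : ℤ) y with h1 | h1
  · simp [kraw_of_lt _ _ _ h1]
  rw [show N + 1 - y.toNat = (N - y.toNat) + 1 by omega,
    kraw_succ_succ p3 hp3 hp3' _ _ (by omega)]
  ring

lemma griffiths_eq (lam p1 p2 p3 : ℝ) (N i j : ℕ) (x y : ℤ) :
    griffiths lam p1 p2 p3 N i j x y = ∑ a ∈ Finset.range (N - j + 1),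
      lam ^ a * kraw p1 (N - j) i a * inner23 p2 p3 N j a x y := by
  unfold griffiths
  split_ifs with h
  · symm
    refine Finset.sum_eq_zero fun a _ => ?_
    have : kraw p2 (N - a) j y = 0 := by
      rcases h with h | h
      · exact kraw_of_neg _ _ _ h
      · exact kraw_of_lt _ _ _ (by omega)
    simp [inner23, this]
  · refine Finset.sum_congr rfl fun a _ => ?_
    rw [inner23, mul_assoc]

/-- Summation over `a` when the weight `K'` arises from `K` by multiplying its generating function
by `1 + r z`; the boundary terms `K (-1)` and `K (M + 1)` vanish. -/
lemma sum_shift (M : ℕ) (lam r : ℝ) (K K' : ℤ → ℝ) (T : ℕ → ℝ)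
    (hK : ∀ a, K' a = K a + r * K (a - 1)) (h0 : K (-1) = 0) (hM : K (M + 1) = 0) :
    ∑ a ∈ Finset.range (M + 1 + 1), lam ^ a * K' a * T a
      = ∑ a ∈ Finset.range (M + 1), lam ^ a * K a * (T a + r * lam * T (a + 1)) := by
  simp only [hK, mul_add, add_mul, Finset.sum_add_distrib]
  congr 1
  · rw [Finset.sum_range_succ]; push_cast; rw [hM]; ring
  · rw [Finset.sum_range_succ']
    simp only [Nat.cast_zero, zero_sub, h0, Nat.cast_add, Nat.cast_one, add_sub_cancel_right]
    rw [mul_zero, mul_zero, zero_mul, add_zero]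
    exact Finset.sum_congr rfl fun a _ => by ring

/-- Multiplication of a coefficient array by the linear form `α t + β u + γ v`. -/
def mulLin (α β γ : ℝ) (f : ℤ → ℤ → ℝ) (x y : ℤ) : ℝ :=
  α * f x y + β * f (x - 1) y + γ * f x (y - 1)

/-- The common part of `griffiths_step₁` and `griffiths_step₂`: `i'` is `i` or `i + 1`, and `r` is
the coefficient in the corresponding recursion of `kraw p1`. -/
lemma griffiths_step (lam p1 p2 p3 : ℝ) (hp2 : 0 < p2) (hp2' : p2 < 1) (hp3 : 0 < p3) (hp3' : p3 < 1)
    (N i j : ℕ) (h : i + j ≤ N) (x y : ℤ) (i' : ℕ) (r : ℝ) (hK : ∀ a, kraw p1 (N - j + 1) i' a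
      = kraw p1 (N - j) i a + r * kraw p1 (N - j) i (a - 1)) :
    griffiths lam p1 p2 p3 (N + 1) i' j x y
      = mulLin (1 + r * lam) (p3 / (1 - p3) - r * lam) (p2 / (1 - p2))
          (griffiths lam p1 p2 p3 N i j) x y := by
  simp only [mulLin, griffiths_eq, Finset.mul_sum, ← Finset.sum_add_distrib]
  rw [show N + 1 - j = (N - j) + 1 by omega,
    sum_shift (N - j) lam r _ _ _ hK (kraw_of_neg _ _ _ (by norm_num))
      (kraw_of_lt _ _ _ (by omega))]
  refine Finset.sum_congr rfl fun a ha => ?_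
  rw [Finset.mem_range] at ha
  rw [inner23_succ p2 p3 hp2 hp2' hp3 hp3' N j a (by omega),
    inner23_succ_a p2 p3 hp3 hp3' N j a (by omega)]
  ring

/-- Multiplication by `L₁`. -/
lemma griffiths_step₁ (lam p1 p2 p3 : ℝ) (hp1 : 0 < p1) (hp1' : p1 < 1)
    (hp2 : 0 < p2) (hp2' : p2 < 1) (hp3 : 0 < p3) (hp3' : p3 < 1) (N i j : ℕ)
    (h : i + j ≤ N) (x y : ℤ) :
    griffiths lam p1 p2 p3 (N + 1) i j x y
    = mulLin (1 + p1 / (1 - p1) * lam) (p3 / (1 - p3) - p1 / (1 - p1) * lam) (p2 / (1 - p2))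
        (griffiths lam p1 p2 p3 N i j) x y :=
  griffiths_step lam p1 p2 p3 hp2 hp2' hp3 hp3' N i j h x y i _
    fun a => kraw_succ p1 hp1 hp1' _ _ (by omega) a

/-- Multiplication by `L₂`. -/
lemma griffiths_step₂ (lam p1 p2 p3 : ℝ) (hp1 : 0 < p1) (hp1' : p1 < 1)
    (hp2 : 0 < p2) (hp2' : p2 < 1) (hp3 : 0 < p3) (hp3' : p3 < 1) (N i j : ℕ)
    (h : i + j ≤ N) (x y : ℤ) :
    griffiths lam p1 p2 p3 (N + 1) (i + 1) j x y
    = mulLin (1 + -1 * lam) (p3 / (1 - p3) - -1 * lam) (p2 / (1 - p2))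
        (griffiths lam p1 p2 p3 N i j) x y :=
  griffiths_step lam p1 p2 p3 hp2 hp2' hp3 hp3' N i j h x y (i + 1) _ fun a => by
    rw [kraw_succ_succ p1 hp1 hp1' _ _ (by omega) a]; ring

/-- Multiplication by `L₃`. -/
lemma griffiths_step₃ (lam p1 p2 p3 : ℝ) (hp2 : 0 < p2) (hp2' : p2 < 1) (hp3 : 0 < p3) (hp3' : p3 < 1)
    (N i j : ℕ) (h : i + j ≤ N) (x y : ℤ) :
    griffiths lam p1 p2 p3 (N + 1) i (j + 1) x y
    = mulLin 1 (p3 / (1 - p3)) (-1) (griffiths lam p1 p2 p3 N i j) x y := by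
  simp only [mulLin, griffiths_eq, Finset.mul_sum, ← Finset.sum_add_distrib,
    Nat.add_sub_add_right]
  refine Finset.sum_congr rfl fun a ha => ?_
  rw [Finset.mem_range] at ha
  rw [inner23_succ_j p2 p3 hp2 hp2' hp3 hp3' N j a (by omega)]
  ring

/-- The action on coefficient arrays of homogeneous polynomials of degree `N` in `t, u, v` of the
vector field `∑ cₐᵦ a ∂ᵦ`, with `a, b` ranging over `t, u, v`: here `f x y` is the coefficient of
`t^(N-x-y) u^x v^y`. -/
def vecField (ctt ctu ctv cut cuu cuv cvt cvu cvv : ℝ) (N : ℕ) (f : ℤ → ℤ → ℝ) (x y : ℤ) : ℝ :=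
  ctu * ((x + 1) * f (x + 1) y) + cut * ((N - x - y + 1) * f (x - 1) y)
    + ctv * ((y + 1) * f x (y + 1)) + cvt * ((N - x - y + 1) * f x (y - 1))
    + cvu * ((x + 1) * f (x + 1) (y - 1)) + cuv * ((y + 1) * f (x - 1) (y + 1))
    + (ctt * (N - x - y) + cuu * x + cvv * y) * f x y

/-- The Leibniz rule: if `D f = e f` and the linear form `L = α t + β u + γ v` satisfies
`D L = μ L`, then `D (L f) = (e + μ) L f`. -/
lemma vecField_mulLin {ctt ctu ctv cut cuu cuv cvt cvu cvv α β γ μ e : ℝ} {N : ℕ}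
    {f : ℤ → ℤ → ℝ}
    (hf : ∀ x y, vecField ctt ctu ctv cut cuu cuv cvt cvu cvv N f x y = e * f x y)
    (ht : α * ctt + β * ctu + γ * ctv = μ * α)
    (hu : α * cut + β * cuu + γ * cuv = μ * β)
    (hv : α * cvt + β * cvu + γ * cvv = μ * γ) (x y : ℤ) :
    vecField ctt ctu ctv cut cuu cuv cvt cvu cvv (N + 1) (mulLin α β γ f) x y
      = (e + μ) * mulLin α β γ f x y := by
  have h1 := hf x y
  have h2 := hf (x - 1) y
  have h3 := hf x (y - 1)
  simp only [vecField, mulLin, add_sub_cancel_right, sub_add_cancel, Int.cast_sub, Int.cast_one,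
    Nat.cast_add, Nat.cast_one] at h1 h2 h3 ⊢
  linear_combination α * h1 + β * h2 + γ * h3 + f x y * ht + f (x - 1) y * hu + f x (y - 1) * hv

/-- The difference relation in the form `D G = -i G`, valid for all integers `x` and `y`. In the
induction one factor is split off: `L₂` if `i > 0`, else `L₃` if `j > 0`, else `L₁`. -/
lemma vecField_griffiths (N : ℕ) (lam p1 p2 p3 : ℝ) (hlam : lam ≠ 0)
    (hp1 : 0 < p1) (hp1' : p1 < 1) (hp2 : 0 < p2) (hp2' : p2 < 1)
    (hp3 : 0 < p3) (hp3' : p3 < 1) (i j : ℕ) (hij : i + j ≤ N) (x y : ℤ) :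
    vecField
      (-(((1 - lam) / lam) * (lam * p1 * (1 - p2) * (1 - p3) - p3 * (1 - p1))))
      (((1 - lam) / lam) * (1 - p3) * (lam * p1 * (p2 - 1) + p1 - 1))
      (-(p1 * (1 - p2) * (1 - lam)))
      (-(((lam * (p3 - 1) - p3) / (lam * (p3 - 1)))
        * (lam * p1 * (1 - p2) * (1 - p3) - p3 * (1 - p1))))
      (-((1 / lam) * (lam * (1 - p3) + p3) * (lam * p1 * (1 - p2) + 1 - p1)))
      (-((p1 * (1 - p2) / (1 - p3)) * (lam * (1 - p3) + p3)))
      (-((p2 / (lam * (1 - p2))) * (lam * p1 * (1 - p2) * (1 - p3) - p3 * (1 - p1))))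
      (-((p2 * (1 - p3) / (lam * (1 - p2))) * (lam * p1 * (1 - p2) + 1 - p1)))
      (-(p1 * p2)) N (griffiths lam p1 p2 p3 N i j) x y
      = -(i : ℝ) * griffiths lam p1 p2 p3 N i j x y := by
  have q1 : 1 - p1 ≠ 0 := by linarith
  have q2 : 1 - p2 ≠ 0 := by linarith
  have q3 : 1 - p3 ≠ 0 := by linarith
  have q3' : p3 - 1 = -(1 - p3) := by ring
  induction N generalizing i j x y with
  | zero =>
    obtain ⟨rfl, rfl⟩ : i = 0 ∧ j = 0 := by omega
    have hG : ∀ x y, griffiths lam p1 p2 p3 0 0 0 x y = if x = 0 ∧ y = 0 then 1 else 0 := by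
      intro x y
      simp only [griffiths_eq, inner23, Nat.zero_sub, kraw_zero_zero, zero_add,
        Finset.sum_range_one, pow_zero, Nat.cast_zero, if_true, one_mul]
      by_cases hx : x = 0 <;> by_cases hy : y = 0 <;> simp [hx, hy]
    -- each shifted delta function is supported where its prefactor vanishes
    have z : ∀ (P : Prop) [Decidable P] (c : ℝ), (P → c = 0) → c * (if P then 1 else 0) = 0 := by
      intro P _ c hc
      split_ifs with hP
      · rw [hc hP, zero_mul]
      · rw [mul_zero]
    simp only [vecField, hG]
    rw [z, z, z, z, z, z, z, z]
    · simp
    all_goals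
      rintro ⟨h1, h2⟩
      have h1' := congrArg (Int.cast : ℤ → ℝ) h1
      have h2' := congrArg (Int.cast : ℤ → ℝ) h2
      push_cast at h1' h2'
      first
        | linarith
        | (push_cast; linarith)
        | simp [h1, h2]
  | succ N ih =>
    rcases Nat.eq_zero_or_pos i with rfl | hi
    · rcases Nat.eq_zero_or_pos j with rfl | hj
      · have hf := ih 0 0 (by omega)
        rw [show griffiths lam p1 p2 p3 (N + 1) 0 0 = _ from funext fun x => funext fun y =>
          griffiths_step₁ lam p1 p2 p3 hp1 hp1' hp2 hp2' hp3 hp3' N 0 0 (by omega) x y]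
        rw [vecField_mulLin (μ := 0) hf, add_zero]
        all_goals simp only [q3', zero_mul, mul_neg]; field_simp; ring
      · obtain ⟨j, rfl⟩ : ∃ k, j = k + 1 := ⟨j - 1, by omega⟩
        have hf := ih 0 j (by omega)
        rw [show griffiths lam p1 p2 p3 (N + 1) 0 (j + 1) = _ from funext fun x => funext fun y =>
          griffiths_step₃ lam p1 p2 p3 hp2 hp2' hp3 hp3' N 0 j (by omega) x y]
        rw [vecField_mulLin (μ := 0) hf, add_zero]
        all_goals simp only [q3', zero_mul, mul_neg]; field_simp; ring
    · obtain ⟨i, rfl⟩ : ∃ k, i = k + 1 := ⟨i - 1, by omega⟩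
      have hf := ih i j (by omega)
      rw [show griffiths lam p1 p2 p3 (N + 1) (i + 1) j = _ from funext fun x => funext fun y =>
        griffiths_step₂ lam p1 p2 p3 hp1 hp1' hp2 hp2' hp3 hp3' N i j (by omega) x y]
      rw [vecField_mulLin (μ := -1) hf]
      · push_cast; ring
      all_goals simp only [q3', mul_neg]; field_simp; try ring

/-- Difference relation (first) for the `λ`-Griffiths polynomials. -/
theorem griffiths_difference_i (N : ℕ) (p1 p2 p3 : ℝ)
    (hp1 : 0 < p1) (hp1' : p1 < 1) (hp2 : 0 < p2) (hp2' : p2 < 1)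
    (hp3 : 0 < p3) (hp3' : p3 < 1) (lam : ℝ) (hlam : lam ≠ 0)
    (i j : ℕ) (hij : i + j ≤ N)
    (x y : ℤ) (hx : 0 ≤ x) (hy : 0 ≤ y) (hxy : x + y ≤ (N : ℤ)) :
    -(i : ℝ) * griffiths lam p1 p2 p3 N i j x y =
      ((x : ℝ) + 1) * ((1 - lam) / lam) * (1 - p3) * (lam * p1 * (p2 - 1) + p1 - 1)
        * griffiths lam p1 p2 p3 N i j (x + 1) y
      - ((N : ℝ) - x - y + 1) * ((lam * (p3 - 1) - p3) / (lam * (p3 - 1)))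
        * (lam * p1 * (1 - p2) * (1 - p3) - p3 * (1 - p1))
        * griffiths lam p1 p2 p3 N i j (x - 1) y
      - (1 + (y : ℝ)) * p1 * (1 - p2) * (1 - lam)
        * griffiths lam p1 p2 p3 N i j x (y + 1)
      - ((N : ℝ) - x - y + 1) * (p2 / (lam * (1 - p2)))
        * (lam * p1 * (1 - p2) * (1 - p3) - p3 * (1 - p1))
        * griffiths lam p1 p2 p3 N i j x (y - 1)
      - ((x : ℝ) + 1) * (p2 * (1 - p3) / (lam * (1 - p2)))
        * (lam * p1 * (1 - p2) + 1 - p1)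
        * griffiths lam p1 p2 p3 N i j (x + 1) (y - 1)
      - ((y : ℝ) + 1) * (p1 * (1 - p2) / (1 - p3)) * (lam * (1 - p3) + p3)
        * griffiths lam p1 p2 p3 N i j (x - 1) (y + 1)
      - ((x : ℝ) * (1 / lam) * (lam * (1 - p3) + p3) * (lam * p1 * (1 - p2) + 1 - p1)
          + (y : ℝ) * p1 * p2
          + ((N : ℝ) - x - y) * ((1 - lam) / lam)
            * (lam * p1 * (1 - p2) * (1 - p3) - p3 * (1 - p1)))
        * griffiths lam p1 p2 p3 N i j x y := by
  rw [← vecField_griffiths N lam p1 p2 p3 hlam hp1 hp1' hp2 hp2' hp3 hp3' i j hij x y]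
  simp only [vecField]
  ring
end

section
/- Let N be a natural number and p a real with 0 < p < 1. Then for all natural numbers i, x with i ≤ N and x ≤ N, the Krawtchouk polynomials satisfy the duality relation w(x;p,N) · k_i(x;p,N) = w(i;p,N) · k_x(i;p,N). -/
/-- The weight function `w(x; p, N)` for the Krawtchouk polynomials. -/
noncomputable def krawWeight (p : ℝ) (N x : ℕ) : ℝ :=
  ((1 - p) / p) ^ x * (x.factorial : ℝ) * ((N - x).factorial : ℝ)

/-- The weight cancels the prefactor of `kraw`, leaving `N!` times a sum visibly symmetric
in `i` and `x`. -/
theorem krawWeight_mul_kraw (N : ℕ) (p : ℝ) (hp : 0 < p) (hp' : p < 1)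
    (i x : ℕ) (hx : x ≤ N) :
    krawWeight p N x * kraw p N i (x : ℤ) = (N.factorial : ℝ) *
      ∑ m ∈ Finset.range (min i x + 1),
        (-1 : ℝ) ^ m * (i.choose m : ℝ) * (x.choose m : ℝ) * (m.factorial : ℝ) *
          ((N - m).factorial / (N.factorial : ℝ)) * p ^ (-(m : ℤ)) := by
  have hq : (0 : ℝ) < 1 - p := by linarith
  have hpow : ((1 - p) / p) ^ x * (p / (1 - p)) ^ x = 1 := by
    rw [← mul_pow, div_mul_div_cancel₀ hp.ne', div_self hq.ne', one_pow]
  have hfac : (N.choose x : ℝ) * x.factorial * (N - x).factorial = N.factorial := by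
    exact_mod_cast Nat.choose_mul_factorial_mul_factorial hx
  rw [krawWeight, kraw, if_neg (by omega)]
  simp only [Int.toNat_natCast, zpow_natCast]
  rw [← hfac, ← mul_assoc]
  congr 1
  linear_combination ((N.choose x : ℝ) * x.factorial * (N - x).factorial) * hpow

/-- Duality relation for the Krawtchouk polynomials. -/
theorem kraw_duality (N : ℕ) (p : ℝ) (hp : 0 < p) (hp' : p < 1)
    (i x : ℕ) (hi : i ≤ N) (hx : x ≤ N) :
    krawWeight p N x * kraw p N i (x : ℤ) = krawWeight p N i * kraw p N x (i : ℤ) := by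
  rw [krawWeight_mul_kraw N p hp hp' i x hx, krawWeight_mul_kraw N p hp hp' x i hi, min_comm]
  congr 1
  exact Finset.sum_congr rfl fun m _ => by ring
end
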